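/- Let α, β: ℝ → Im ℍ be differentiable with α'(t) = (2/3)·α(t)×β(t) and β'(t) = −(2/3)·α(t)×β(t) for all t. Then: (i) α(t) = −β(t) for all t if and only if α(0) = −β(0); (ii) α(t) = β(t) for all t if and only if α(0) = β(0). Consequently, since for a curve γ with γ'(t) = (x(t)α(t), y(t)β(t)) one has Pγ'(t) = (x(t)β(t), y(t)α(t)), the tangent vector of the geodesic is an eigenvector of P with eigenvalue −1 (respectively +1) along the whole geodesic if and only if it is so at at a single point. -/

import Mathlib

open Quaternion

/-- The cross product `α×β = (αβ − βα)/2` of (imaginary) quaternions. -/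
noncomputable def qcross (x y : ℍ[ℝ]) : ℍ[ℝ] := (x * y - y * x) / 2

/-- The almost product structure `P(U,V) = (pq⁻¹V, qp⁻¹U)` at `(p, q)`. -/
noncomputable def Pmap (p q : ℍ[ℝ]) (Z : ℍ[ℝ] × ℍ[ℝ]) : ℍ[ℝ] × ℍ[ℝ] :=
  (p * q⁻¹ * Z.2, q * p⁻¹ * Z.1)

/-
The sum `α + β` is constant because the two derivatives are opposite. The difference `α - β` has
derivative `2c (α × β)`, which is orthogonal to both `α` and `β`, so `α - β` has constant norm.
Vanishing of either combination therefore propagates from one time to all times, and `P` exchanges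
`α` and `β` in a left-trivialized tangent vector `(xα, yβ)`, so that its eigenvalue equations for
`∓1` read `α = -β` and `α = β`.
-/

section OppositeDerivatives

variable {E : Type*} [NormedAddCommGroup E]

theorem add_eq_add_of_hasDerivAt_neg [NormedSpace ℝ E] {f g v : ℝ → E}
    (hf : ∀ t, HasDerivAt f (v t) t) (hg : ∀ t, HasDerivAt g (-v t) t) (s t : ℝ) :
    f s + g s = f t + g t := by
  have hsum (r : ℝ) : HasDerivAt (f + g) 0 r := by
    simpa only [add_neg_cancel] using (hf r).add (hg r)
  exact is_const_of_deriv_eq_zero (fun r ↦ (hsum r).differentiableAt) (fun r ↦ (hsum r).deriv) s t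

theorem forall_eq_neg_iff_of_hasDerivAt_neg [NormedSpace ℝ E] {f g v : ℝ → E}
    (hf : ∀ t, HasDerivAt f (v t) t) (hg : ∀ t, HasDerivAt g (-v t) t) (t₀ : ℝ) :
    (∀ t, f t = -g t) ↔ f t₀ = -g t₀ := by
  refine ⟨fun h ↦ h t₀, fun h t ↦ ?_⟩
  rw [eq_neg_iff_add_eq_zero] at h ⊢
  rw [add_eq_add_of_hasDerivAt_neg hf hg t t₀, h]

variable [InnerProductSpace ℝ E]

theorem norm_eq_norm_of_inner_hasDerivAt_eq_zero {u u' : ℝ → E}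
    (hu : ∀ t, HasDerivAt u (u' t) t) (horth : ∀ t, inner ℝ (u t) (u' t) = 0) (s t : ℝ) :
    ‖u s‖ = ‖u t‖ := by
  have hsq (r : ℝ) : HasDerivAt (fun t ↦ ‖u t‖ ^ 2) 0 r := by
    simpa only [horth, mul_zero] using (hu r).norm_sq
  have hconst : ‖u s‖ ^ 2 = ‖u t‖ ^ 2 :=
    is_const_of_deriv_eq_zero (fun r ↦ (hsq r).differentiableAt) (fun r ↦ (hsq r).deriv) s t
  exact (sq_eq_sq₀ (norm_nonneg _) (norm_nonneg _)).mp hconst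

theorem forall_eq_iff_of_hasDerivAt_neg {f g v : ℝ → E}
    (hf : ∀ t, HasDerivAt f (v t) t) (hg : ∀ t, HasDerivAt g (-v t) t)
    (horth : ∀ t, inner ℝ (f t - g t) (v t) = 0) (t₀ : ℝ) :
    (∀ t, f t = g t) ↔ f t₀ = g t₀ := by
  refine ⟨fun h ↦ h t₀, fun h t ↦ ?_⟩
  have hnorm : ‖f t - g t‖ = ‖f t₀ - g t₀‖ :=
    norm_eq_norm_of_inner_hasDerivAt_eq_zero (u := fun t ↦ f t - g t)
      (fun r ↦ (hf r).fun_sub (hg r))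
      (fun r ↦ by rw [sub_neg_eq_add, inner_add_right, horth, add_zero]) t t₀
  rwa [h, sub_self, norm_zero, norm_eq_zero, sub_eq_zero] at hnorm

end OppositeDerivatives

section CrossProduct

theorem qcross_eq_smul (a b : ℍ[ℝ]) : qcross a b = (2⁻¹ : ℝ) • (a * b - b * a) := by
  rw [qcross, div_eq_mul_inv, ← mul_coe_eq_smul, coe_inv, ← algebraMap_def, map_ofNat]

theorem qcross_swap (a b : ℍ[ℝ]) : qcross b a = -qcross a b := by
  rw [qcross, qcross, ← neg_div, neg_sub]

theorem inner_self_qcross (a b : ℍ[ℝ]) : inner ℝ a (qcross a b) = 0 := by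
  have hcomm : inner ℝ a (a * b) = inner ℝ a (b * a) := by
    simp only [inner_def, star_mul, re_mul, imI_mul, imJ_mul, imK_mul, re_star, imI_star,
      imJ_star, imK_star]
    ring
  rw [qcross_eq_smul, inner_smul_right, inner_sub_right, hcomm, sub_self, mul_zero]

theorem inner_sub_qcross (a b : ℍ[ℝ]) : inner ℝ (a - b) (qcross a b) = 0 := by
  rw [inner_sub_left, inner_self_qcross, ← neg_neg (qcross a b), ← qcross_swap, inner_neg_right,
    inner_self_qcross, neg_zero, sub_zero]

end CrossProduct

section AlmostProductStructure

variable {p q : ℍ[ℝ]}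

theorem Pmap_mul_mul (hp : p ≠ 0) (hq : q ≠ 0) (a b : ℍ[ℝ]) :
    Pmap p q (p * a, q * b) = (p * b, q * a) := by
  simp only [Pmap, mul_assoc, inv_mul_cancel_left₀ hp, inv_mul_cancel_left₀ hq]

theorem Pmap_mul_mul_eq_self_iff (hp : p ≠ 0) (hq : q ≠ 0) {a b : ℍ[ℝ]} :
    Pmap p q (p * a, q * b) = (p * a, q * b) ↔ a = b := by
  rw [Pmap_mul_mul hp hq, Prod.mk_inj, mul_right_inj' hp, mul_right_inj' hq, eq_comm, and_self]

theorem Pmap_mul_mul_eq_neg_iff (hp : p ≠ 0) (hq : q ≠ 0) {a b : ℍ[ℝ]} :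
    Pmap p q (p * a, q * b) = -(p * a, q * b) ↔ a = -b := by
  rw [Pmap_mul_mul hp hq, Prod.neg_mk, Prod.mk_inj, ← mul_neg, ← mul_neg, mul_right_inj' hp,
    mul_right_inj' hq, eq_comm, neg_eq_iff_eq_neg, and_self]

end AlmostProductStructure

theorem P_eigenvector_iff_at_point_general {α β : ℝ → ℍ[ℝ]} {c : ℝ → ℝ}
    (hα : ∀ t, HasDerivAt α (c t • qcross (α t) (β t)) t)
    (hβ : ∀ t, HasDerivAt β (-(c t • qcross (α t) (β t))) t)
    {x y : ℝ → ℍ[ℝ]} (hx : ∀ t, x t ≠ 0) (hy : ∀ t, y t ≠ 0) (t₀ : ℝ) :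
    ((∀ t, α t = -(β t)) ↔ α t₀ = -(β t₀)) ∧
    ((∀ t, α t = β t) ↔ α t₀ = β t₀) ∧
    ((∀ t, Pmap (x t) (y t) (x t * α t, y t * β t) = -(x t * α t, y t * β t)) ↔
      Pmap (x t₀) (y t₀) (x t₀ * α t₀, y t₀ * β t₀) = -(x t₀ * α t₀, y t₀ * β t₀)) ∧
    ((∀ t, Pmap (x t) (y t) (x t * α t, y t * β t) = (x t * α t, y t * β t)) ↔
      Pmap (x t₀) (y t₀) (x t₀ * α t₀, y t₀ * β t₀) = (x t₀ * α t₀, y t₀ * β t₀)) := by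
  have hneg : (∀ t, α t = -(β t)) ↔ α t₀ = -(β t₀) :=
    forall_eq_neg_iff_of_hasDerivAt_neg hα hβ t₀
  have heq : (∀ t, α t = β t) ↔ α t₀ = β t₀ :=
    forall_eq_iff_of_hasDerivAt_neg hα hβ
      (fun t ↦ by rw [inner_smul_right, inner_sub_qcross, mul_zero]) t₀
  simp only [Pmap_mul_mul_eq_neg_iff (hx _) (hy _), Pmap_mul_mul_eq_self_iff (hx _) (hy _)]
  exact ⟨hneg, heq, hneg, heq⟩

/-- If `α, β : ℝ → Im ℍ` satisfy `α' = (2/3) α×β` and `β' = −(2/3) α×β`, then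
(i) `α ≡ −β` iff `α(0) = −β(0)`; (ii) `α ≡ β` iff `α(0) = β(0)`. Consequently,
for a curve `γ = (x,y)` of unit quaternions with `γ' = (xα, yβ)` (so `Pγ' = (xβ, yα)`),
the tangent vector is an eigenvector of `P` with eigenvalue `−1` (resp. `+1`) along the
whole geodesic if and only if it is so at a single point. -/
theorem P_eigenvector_iff_at_point (α β : ℝ → ℍ[ℝ])
    (hαim : ∀ t, (α t).re = 0) (hβim : ∀ t, (β t).re = 0)
    (hα : ∀ t, HasDerivAt α ((2/3 : ℝ) • qcross (α t) (β t)) t)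
    (hβ : ∀ t, HasDerivAt β (-((2/3 : ℝ) • qcross (α t) (β t))) t)
    (x y : ℝ → ℍ[ℝ]) (hx : ∀ t, ‖x t‖ = 1) (hy : ∀ t, ‖y t‖ = 1) :
    ((∀ t, α t = -(β t)) ↔ α 0 = -(β 0)) ∧
    ((∀ t, α t = β t) ↔ α 0 = β 0) ∧
    ((∀ t, Pmap (x t) (y t) (x t * α t, y t * β t) = -(x t * α t, y t * β t)) ↔
      Pmap (x 0) (y 0) (x 0 * α 0, y 0 * β 0) = -(x 0 * α 0, y 0 * β 0)) ∧
    ((∀ t, Pmap (x t) (y t) (x t * α t, y t * β t) = (x t * α t, y t * β t)) ↔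
      Pmap (x 0) (y 0) (x 0 * α 0, y 0 * β 0) = (x 0 * α 0, y 0 * β 0)) := by
  have ne_zero {z : ℍ[ℝ]} (hz : ‖z‖ = 1) : z ≠ 0 := norm_ne_zero_iff.mp (hz ▸ one_ne_zero)
  exact P_eigenvector_iff_at_point_general hα hβ (fun t ↦ ne_zero (hx t)) (fun t ↦ ne_zero (hy t)) 0
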